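/- Let X be ℝⁿ equipped with the ℓ¹ norm ‖x‖₁ = Σᵢ |xᵢ|. Then the closed Euclidean unit ball B(l₂ⁿ) = {x ∈ ℝⁿ : Σᵢ xᵢ² ≤ 1} is a sufficient enlargement for X. -/

import Mathlib

open Set Metric MeasureTheory
open scoped Pointwise ENNReal

/-- A *ball* in a normed space: a bounded closed convex set, symmetric with
respect to `0`, with nonempty interior. -/
def IsBall {X : Type*} [NormedAddCommGroup X] [NormedSpace ℝ X] (A : Set X) : Prop :=
  Bornology.IsBounded A ∧ IsClosed A ∧ Convex ℝ A ∧ (∀ x ∈ A, -x ∈ A) ∧ (interior A).Nonempty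

/-- `A` is a sufficient enlargement for `X`: for every isometric embedding of `X`
into a Banach space `Y` there is a continuous linear projection `P : Y → X`
(i.e. `P ∘ i = id`) with `P (B(Y)) ⊆ A`. -/
def IsSufficientEnlargement {X : Type*} [NormedAddCommGroup X] [NormedSpace ℝ X]
    (A : Set X) : Prop :=
  ∀ (Y : Type) [NormedAddCommGroup Y] [NormedSpace ℝ Y] [CompleteSpace Y],
    ∀ i : X →ₗᵢ[ℝ] Y, ∃ P : Y →L[ℝ] X, (∀ x, P (i x) = x) ∧ P '' closedBall 0 1 ⊆ A

/-!
Let `r k` be the Rademacher functions on the cube `{±1}^ι`. The operator `x ↦ ∑ k, x k • r k` is a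
contraction from `ℓ¹(ι)` to `ℓ^∞({±1}^ι)`, and the latter space is injective (Hahn–Banach in every
coordinate), so this operator extends along `i` to a contraction `S` on `Y`. Since the `r k` are
orthonormal for the uniform probability measure on the cube, following `S` by
`h ↦ (⟪r k, h⟫)ₖ` gives a left inverse of `i`. By Bessel's inequality this left inverse maps the
unit ball into the Euclidean ball, because the sup norm dominates the `L²` norm of a probability
measure.
-/

section Extension

variable {𝕜 X Y : Type*} [RCLike 𝕜] [NormedAddCommGroup X] [NormedSpace 𝕜 X]
  [SeminormedAddCommGroup Y] [NormedSpace 𝕜 Y]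

theorem exists_extension_along_isometry (i : X →ₗᵢ[𝕜] Y) (f : StrongDual 𝕜 X) :
    ∃ g : StrongDual 𝕜 Y, (∀ x, g (i x) = f x) ∧ ‖g‖ ≤ ‖f‖ := by
  obtain ⟨g, hg, hnorm⟩ := exists_extension_norm_eq (LinearMap.range i.toLinearMap)
    (f ∘L (i.equivRange.symm : LinearMap.range i.toLinearMap →L[𝕜] X))
  refine ⟨g, fun x => ?_, ?_⟩
  · simpa using hg (i.equivRange x)
  · refine hnorm.le.trans (ContinuousLinearMap.opNorm_le_bound _ (norm_nonneg f) fun y => ?_)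
    simpa using f.le_opNorm (i.equivRange.symm y)

theorem exists_pi_extension_along_isometry {Ω : Type*} [Fintype Ω] (i : X →ₗᵢ[𝕜] Y)
    (T : X →L[𝕜] Ω → 𝕜) : ∃ S : Y →L[𝕜] Ω → 𝕜, (∀ x, S (i x) = T x) ∧ ‖S‖ ≤ ‖T‖ := by
  choose g hg hnorm using fun ω =>
    exists_extension_along_isometry i (ContinuousLinearMap.proj ω ∘L T)
  refine ⟨ContinuousLinearMap.pi g, fun x => funext fun ω => hg ω x, ?_⟩
  refine ContinuousLinearMap.norm_pi_le_of_le (fun ω => (hnorm ω).trans ?_) (norm_nonneg T)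
  exact ContinuousLinearMap.opNorm_le_bound _ (norm_nonneg T) fun x =>
    (norm_le_pi_norm (T x) ω).trans (T.le_opNorm x)

end Extension

section Synthesis

variable {𝕜 ι E : Type*} [NontriviallyNormedField 𝕜] [Fintype ι] [SeminormedAddCommGroup E]
  [NormedSpace 𝕜 E]

variable (𝕜) in
/-- The synthesis operator of a finite family of vectors `v`, which sends a coefficient vector `x`
in `ℓ¹` to `∑ k, x k • v k`. -/
def synthesisOperator (v : ι → E) : PiLp 1 (fun _ : ι => 𝕜) →L[𝕜] E :=
  ∑ k, (PiLp.proj 1 (fun _ : ι => 𝕜) k).smulRight (v k)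

theorem synthesisOperator_apply (v : ι → E) (x : PiLp 1 (fun _ : ι => 𝕜)) :
    synthesisOperator 𝕜 v x = ∑ k, x k • v k := by
  simp [synthesisOperator]

theorem norm_synthesisOperator_le_one {v : ι → E} (hv : ∀ k, ‖v k‖ ≤ 1) :
    ‖synthesisOperator 𝕜 v‖ ≤ 1 := by
  refine ContinuousLinearMap.opNorm_le_bound _ zero_le_one fun x => ?_
  calc ‖synthesisOperator 𝕜 v x‖ ≤ ∑ k, ‖x k • v k‖ :=
        synthesisOperator_apply v x ▸ norm_sum_le _ _
    _ ≤ ∑ k, ‖x k‖ := by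
        gcongr with k
        exact (norm_smul_le _ _).trans (mul_le_of_le_one_right (norm_nonneg _) (hv k))
    _ = 1 * ‖x‖ := by rw [one_mul, PiLp.norm_eq_of_L1]

end Synthesis

section OrthonormalSystem

open Finset WithLp RCLike
open scoped BigOperators InnerProductSpace

variable {𝕜 ι Ω : Type*} [RCLike 𝕜] [Fintype Ω]

theorem wInner_cWeight_eq_inner_toLp (f g : Ω → 𝕜) :
    ⟪f, g⟫ₙ_[𝕜] =
      ⟪toLp 2 ((√(Fintype.card Ω))⁻¹ • f), toLp 2 ((√(Fintype.card Ω))⁻¹ • g)⟫_𝕜 := by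
  have hweight : (√(Fintype.card Ω))⁻¹ * (√(Fintype.card Ω))⁻¹ = (Fintype.card Ω : ℝ)⁻¹ := by
    rw [← mul_inv, Real.mul_self_sqrt (Nat.cast_nonneg _)]
  rw [← wInner_one_eq_inner, wInner_smul_left, wInner_smul_right, smul_smul]
  simp [wInner, hweight, smul_sum]

theorem norm_sq_toLp_inv_sqrt_card_smul (f : Ω → 𝕜) :
    ‖toLp 2 ((√(Fintype.card Ω))⁻¹ • f)‖ ^ 2 = 𝔼 ω, ‖f ω‖ ^ 2 := by
  have hweight : ‖(√(Fintype.card Ω))⁻¹‖ ^ 2 = (Fintype.card Ω : ℝ)⁻¹ := by simp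
  simp only [EuclideanSpace.norm_sq_eq, Pi.smul_apply, norm_smul, mul_pow, hweight, ← mul_sum]
  rw [Fintype.expect_eq_sum_div_card, div_eq_inv_mul]

theorem sum_norm_sq_wInner_cWeight_le [Fintype ι] [DecidableEq ι] {u : ι → Ω → 𝕜}
    (horth : ∀ j k, ⟪u j, u k⟫ₙ_[𝕜] = if j = k then 1 else 0) (h : Ω → 𝕜) :
    ∑ k, ‖⟪u k, h⟫ₙ_[𝕜]‖ ^ 2 ≤ 𝔼 ω, ‖h ω‖ ^ 2 := by
  simp only [wInner_cWeight_eq_inner_toLp] at horth ⊢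
  rw [← norm_sq_toLp_inv_sqrt_card_smul]
  exact (orthonormal_iff_ite.2 horth).sum_inner_products_le _

theorem expect_norm_sq_le_norm_sq {E : Type*} [SeminormedAddCommGroup E] (h : Ω → E) :
    𝔼 ω, ‖h ω‖ ^ 2 ≤ ‖h‖ ^ 2 := by
  rcases isEmpty_or_nonempty Ω with _ | _
  · simp
  · exact expect_le univ_nonempty fun ω _ => by gcongr; exact norm_le_pi_norm h ω

variable [Fintype ι]

/-- The analysis operator of a finite family of functions `u` on a finite set, which sends `h` to
its coefficients `⟪u k, h⟫` in the inner product of the uniform probability measure. It takes values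
in `ℓ¹`, so as to be a left inverse of the synthesis operator for orthonormal `u`. -/
noncomputable def analysisOperator (u : ι → Ω → 𝕜) : (Ω → 𝕜) →L[𝕜] PiLp 1 (fun _ : ι => 𝕜) :=
  LinearMap.toContinuousLinearMap
    { toFun := fun h => toLp 1 fun k => ⟪u k, h⟫ₙ_[𝕜]
      map_add' := fun g h => by ext k; simp [wInner_add_right]
      map_smul' := fun c h => by ext k; simp [wInner_smul_right] }

theorem analysisOperator_apply (u : ι → Ω → 𝕜) (h : Ω → 𝕜) (k : ι) :
    analysisOperator u h k = ⟪u k, h⟫ₙ_[𝕜] := rfl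

variable [DecidableEq ι] {u : ι → Ω → 𝕜}

theorem analysisOperator_synthesisOperator
    (horth : ∀ j k, ⟪u j, u k⟫ₙ_[𝕜] = if j = k then 1 else 0) (x : PiLp 1 (fun _ : ι => 𝕜)) :
    analysisOperator u (synthesisOperator 𝕜 u x) = x := by
  ext k
  have hcoeff (j : ι) : analysisOperator u (u j) k = if k = j then 1 else 0 := horth k j
  simp [synthesisOperator_apply, hcoeff]

theorem exists_leftInverse_sum_norm_sq_le {Y : Type*} [SeminormedAddCommGroup Y]
    [NormedSpace 𝕜 Y] (hbound : ∀ k, ‖u k‖ ≤ 1)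
    (horth : ∀ j k, ⟪u j, u k⟫ₙ_[𝕜] = if j = k then 1 else 0)
    (i : PiLp 1 (fun _ : ι => 𝕜) →ₗᵢ[𝕜] Y) :
    ∃ P : Y →L[𝕜] PiLp 1 (fun _ : ι => 𝕜),
      (∀ x, P (i x) = x) ∧ ∀ y, ∑ k, ‖P y k‖ ^ 2 ≤ ‖y‖ ^ 2 := by
  obtain ⟨S, hS, hnorm⟩ := exists_pi_extension_along_isometry i (synthesisOperator 𝕜 u)
  have hcontraction (y : Y) : ‖S y‖ ≤ ‖y‖ := by
    simpa using S.le_of_opNorm_le (hnorm.trans (norm_synthesisOperator_le_one hbound)) y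
  refine ⟨analysisOperator u ∘L S, fun x => ?_, fun y => ?_⟩
  · rw [ContinuousLinearMap.comp_apply, hS, analysisOperator_synthesisOperator horth]
  · calc ∑ k, ‖analysisOperator u (S y) k‖ ^ 2 ≤ 𝔼 ω, ‖S y ω‖ ^ 2 :=
          sum_norm_sq_wInner_cWeight_le horth (S y)
      _ ≤ ‖S y‖ ^ 2 := expect_norm_sq_le_norm_sq (S y)
      _ ≤ ‖y‖ ^ 2 := by gcongr; exact hcontraction y

end OrthonormalSystem

section Rademacher

open RCLike
open scoped BigOperators ComplexConjugate InnerProductSpace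

/-- The `k`-th Rademacher function `ε ↦ ε k` on the cube `{±1}^ι`, encoded as a character of the
group `ι → ℤˣ`. -/
def rademacher (R : Type*) {ι : Type*} [Ring R] (k : ι) : (ι → ℤˣ) →* R :=
  ((Int.castRingHom R : ℤ →* R).comp (Units.coeHom ℤ)).comp (Pi.evalMonoidHom _ k)

theorem rademacher_apply {R ι : Type*} [Ring R] (k : ι) (ε : ι → ℤˣ) :
    rademacher R k ε = ((ε k : ℤ) : R) := rfl

theorem rademacher_mul_rademacher_ne_one {R ι : Type*} [CommRing R] [NeZero (2 : R)] {j k : ι}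
    (hjk : j ≠ k) : rademacher R j * rademacher R k ≠ 1 := by
  classical
  intro h
  have hflip : (-1 : R) = 1 := by
    simpa [rademacher_apply, hjk.symm] using DFunLike.congr_fun h (Pi.mulSingle j (-1))
  exact two_ne_zero (α := R) (by linear_combination -hflip)

variable (𝕜 : Type*) {ι : Type*} [RCLike 𝕜]

theorem norm_rademacher_apply (k : ι) (ε : ι → ℤˣ) : ‖rademacher 𝕜 k ε‖ = 1 := by
  rcases Int.units_eq_one_or (ε k) with h | h <;> simp [rademacher_apply, h]

theorem conj_rademacher_apply (k : ι) (ε : ι → ℤˣ) :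
    conj (rademacher 𝕜 k ε) = rademacher 𝕜 k ε := by
  simp [rademacher_apply]

variable [Fintype ι] [DecidableEq ι]

theorem norm_rademacher_le_one (k : ι) : ‖⇑(rademacher 𝕜 k)‖ ≤ 1 :=
  (pi_norm_le_iff_of_nonneg zero_le_one).2 fun ε => (norm_rademacher_apply 𝕜 k ε).le

theorem wInner_cWeight_rademacher (j k : ι) :
    ⟪⇑(rademacher 𝕜 j), ⇑(rademacher 𝕜 k)⟫ₙ_[𝕜] = if j = k then 1 else 0 := by
  split_ifs with hjk
  · subst hjk
    simp [wInner_cWeight_eq_expect, norm_rademacher_apply]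
  · have hsum : ∑ ε, rademacher 𝕜 k ε * rademacher 𝕜 j ε = 0 :=
      sum_hom_units_eq_zero _ (rademacher_mul_rademacher_ne_one (Ne.symm hjk))
    simp only [wInner_cWeight_eq_smul_wInner_one, wInner_one_eq_sum, RCLike.inner_apply,
      conj_rademacher_apply, hsum, smul_zero]

end Rademacher

theorem statement15_general {𝕜 ι Y : Type*} [RCLike 𝕜] [Fintype ι] [SeminormedAddCommGroup Y]
    [NormedSpace 𝕜 Y] (i : PiLp 1 (fun _ : ι => 𝕜) →ₗᵢ[𝕜] Y) :
    ∃ P : Y →L[𝕜] PiLp 1 (fun _ : ι => 𝕜), (∀ x, P (i x) = x) ∧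
      P '' closedBall 0 1 ⊆ {x | ∑ k, ‖x k‖ ^ 2 ≤ 1} := by
  classical
  obtain ⟨P, hleft, hbessel⟩ := exists_leftInverse_sum_norm_sq_le
    (norm_rademacher_le_one 𝕜) (wInner_cWeight_rademacher 𝕜) i
  refine ⟨P, hleft, image_subset_iff.2 fun y hy => (hbessel y).trans ?_⟩
  exact pow_le_one₀ (norm_nonneg y) (mem_closedBall_zero_iff.1 hy)

/-- The Euclidean unit ball `B(l₂ⁿ)` is a sufficient enlargement for `l₁ⁿ`
(`ℝⁿ` with the norm `‖x‖₁ = Σᵢ |xᵢ|`). -/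
theorem statement15 {n : ℕ} :
    IsSufficientEnlargement
      {x : PiLp 1 (fun _ : Fin n => ℝ) | ∑ i, (x i) ^ 2 ≤ 1} := by
  intro Y _ _ _ i
  simpa only [Real.norm_eq_abs, sq_abs] using statement15_general i
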